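/- Let n ≥ 1 and let m be a positive integer with m > (n+2)/4. Then there exists a constant C = C(m,n) > 0 such that for every Schwartz function u on ℝ^{n+1}, ‖u‖_{L^∞(ℝ^{n+1})} ≤ C (1 + ‖u‖_{BMOₚ(ℝ^{n+1})} (1 + log⁺ ‖u‖_{W₂^{2m,m}(ℝ^{n+1})})). -/

import Mathlib

open MeasureTheory Real
open scoped FourierTransform ENNReal

noncomputable section

/-- The model space for `ℝ^{n+1}`: generic point `z = (x, t)` where the spatial
coordinates are `x i = z i.castSucc` (`i : Fin n`) and the time coordinate is
`t = z (Fin.last n)`. -/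
abbrev PSpace (n : ℕ) := EuclideanSpace ℝ (Fin (n + 1))

/-- The parabolic distance `‖z‖ₚ = max (maxᵢ |xᵢ|) √|t|` from `z` to the origin. -/
def pnorm {n : ℕ} (z : PSpace n) : ℝ :=
  max (⨆ i : Fin n, |z i.castSucc|) (Real.sqrt |z (Fin.last n)|)

/-- The parabolic cube of radius `r` centered at `z₀`. -/
def pCube {n : ℕ} (z₀ : PSpace n) (r : ℝ) : Set (PSpace n) :=
  {z | pnorm (z - z₀) < r}

/-- The set of mean oscillations `⨍_Q |u - u_Q|` of `u` over parabolic cubes `Q ⊆ O`. -/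
def oscSet {n : ℕ} (O : Set (PSpace n)) (u : PSpace n → ℝ) : Set ℝ :=
  {v | ∃ z₀ r, 0 < r ∧ pCube z₀ r ⊆ O ∧
    v = ⨍ z in pCube z₀ r, |u z - ⨍ w in pCube z₀ r, u w|}

/-- The parabolic BMO norm of `u` over `O`. -/
def pBMO {n : ℕ} (O : Set (PSpace n)) (u : PSpace n → ℝ) : ℝ := sSup (oscSet O u)

/-- The set of quantities `inf_c ⨍_Q |u - c|` over parabolic cubes `Q ⊆ O`. -/
def infOscSet {n : ℕ} (O : Set (PSpace n)) (u : PSpace n → ℝ) : Set ℝ :=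
  {v | ∃ z₀ r, 0 < r ∧ pCube z₀ r ⊆ O ∧
    v = ⨅ c : ℝ, ⨍ z in pCube z₀ r, |u z - c|}

/-- Time derivative `D_t u`. -/
def Dt {n : ℕ} (u : PSpace n → ℝ) : PSpace n → ℝ :=
  fun z => fderiv ℝ u z (EuclideanSpace.single (Fin.last n) 1)

/-- Spatial derivative in direction `i`. -/
def Dx {n : ℕ} (i : Fin n) (u : PSpace n → ℝ) : PSpace n → ℝ :=
  fun z => fderiv ℝ u z (EuclideanSpace.single i.castSucc 1)

/-- Spatial derivative `D_x^α` for a multi-index `α`. -/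
def DxPow {n : ℕ} (α : Fin n → ℕ) (u : PSpace n → ℝ) : PSpace n → ℝ :=
  (List.finRange n).foldr (fun i v => (Dx i)^[α i] v) u

/-- The mixed derivative `D_t^r D_x^α u`. -/
def mixDeriv {n : ℕ} (r : ℕ) (α : Fin n → ℕ) (u : PSpace n → ℝ) : PSpace n → ℝ :=
  Dt^[r] (DxPow α u)

/-- The `L²(O)` norm. -/
def L2norm {n : ℕ} (O : Set (PSpace n)) (v : PSpace n → ℝ) : ℝ :=
  (eLpNorm v 2 (volume.restrict O)).toReal

/-- The parabolic Sobolev norm `‖u‖_{W₂^{2m,m}(O)} = Σ_{2r+s ≤ 2m} Σ_{|α| = s}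
‖D_t^r D_x^α u‖_{L²(O)}`. -/
def sobNorm {n : ℕ} (m : ℕ) (O : Set (PSpace n)) (u : PSpace n → ℝ) : ℝ :=
  ∑ p ∈ (Finset.range (2 * m + 1) ×ˢ Finset.range (2 * m + 1)).filter
      (fun p => 2 * p.1 + p.2 ≤ 2 * m),
    ∑ α ∈ Finset.Nat.antidiagonalTuple n p.2, L2norm O (mixDeriv p.1 α u)

/-- `log⁺ x = max (log x) 0`. -/
def logPlus (x : ℝ) : ℝ := max (Real.log x) 0

/-- The domain `Ω_T = (0,1)ⁿ × (0,T)`. -/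
def OmegaT (n : ℕ) (T : ℝ) : Set (PSpace n) :=
  {z | (∀ i : Fin n, z i.castSucc ∈ Set.Ioo (0 : ℝ) 1) ∧ z (Fin.last n) ∈ Set.Ioo 0 T}

/-- The anisotropic dilation `η^a z = (η x, η² t)` with `a = (1,…,1,2)`. -/
def pdil {n : ℕ} (η : ℝ) (z : PSpace n) : PSpace n :=
  (EuclideanSpace.equiv (Fin (n + 1)) ℝ).symm
    (fun i => if i = Fin.last n then η ^ 2 * z i else η * z i)

/-- The anisotropic dyadic partition of unity `ψ_j` built from `ψ₀`:
`ψ_j z = ψ₀ (2^{-ja} z) - ψ₀ (2^{-(j-1)a} z)` for `j ≥ 1`. -/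
def psiJ {n : ℕ} (ψ₀ : PSpace n → ℝ) : ℕ → PSpace n → ℝ
  | 0 => ψ₀
  | (j + 1) => fun z =>
      ψ₀ (pdil ((2 : ℝ) ^ (-((j : ℝ) + 1))) z) - ψ₀ (pdil ((2 : ℝ) ^ (-(j : ℝ))) z)

/-- `φ_j = 𝓕⁻¹ ψ_j`, the inverse Fourier transform of `ψ_j`. -/
def phiJ {n : ℕ} (ψ₀ : PSpace n → ℝ) (j : ℕ) : PSpace n → ℂ :=
  𝓕⁻ (fun z => ((psiJ ψ₀ j z : ℝ) : ℂ))

/-- The convolution `(φ * u) z = ∫ φ (z - w) u w dw`. -/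
def pconv {n : ℕ} (φ : PSpace n → ℂ) (u : PSpace n → ℝ) (z : PSpace n) : ℂ :=
  ∫ w, φ (z - w) * (u w : ℂ)

/-- The truncated Lizorkin–Triebel norm `‖u‖_{F̃⁰_{∞,1}} = ‖Σ_{j≥1} |φ_j * u|‖_∞`. -/
def F01norm {n : ℕ} (ψ₀ : PSpace n → ℝ) (u : PSpace n → ℝ) : ℝ :=
  ⨆ z, ∑' j : ℕ, ‖pconv (phiJ ψ₀ (j + 1)) u z‖

/-- The truncated Lizorkin–Triebel norm `‖u‖_{F̃⁰_{∞,2}} = ‖(Σ_{j≥1} |φ_j * u|²)^{1/2}‖_∞`. -/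
def F02norm {n : ℕ} (ψ₀ : PSpace n → ℝ) (u : PSpace n → ℝ) : ℝ :=
  ⨆ z, Real.sqrt (∑' j : ℕ, ‖pconv (phiJ ψ₀ (j + 1)) u z‖ ^ 2)

/-- The Lizorkin–Triebel norm `‖u‖_{F^γ_{∞,2}} = ‖(Σ_{j≥0} 2^{2γj} |φ_j * u|²)^{1/2}‖_∞`. -/
def Fg2norm {n : ℕ} (ψ₀ : PSpace n → ℝ) (γ : ℝ) (u : PSpace n → ℝ) : ℝ :=
  ⨆ z, Real.sqrt (∑' j : ℕ, (2 : ℝ) ^ (2 * γ * j) * ‖pconv (phiJ ψ₀ j) u z‖ ^ 2)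

/-- The anisotropic Besov quasi-norm `‖u‖_{B^s_{p,q}}`. -/
def besovNorm {n : ℕ} (ψ₀ : PSpace n → ℝ) (s : ℝ) (p q : ℝ≥0∞) (u : PSpace n → ℝ) : ℝ :=
  if q = ∞ then ⨆ j : ℕ, (2 : ℝ) ^ (s * j) * (eLpNorm (pconv (phiJ ψ₀ j) u) p volume).toReal
  else (∑' j : ℕ, ((2 : ℝ) ^ (s * j) *
    (eLpNorm (pconv (phiJ ψ₀ j) u) p volume).toReal) ^ q.toReal) ^ (1 / q.toReal)

/-- The standing hypotheses on the cut-off function `ψ₀`: smooth, compactly supported,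
equal to `1` on `{‖z‖ₚ ≤ 1}` and to `0` on `{‖z‖ₚ ≥ 2}`. -/
structure IsCutoff {n : ℕ} (ψ₀ : PSpace n → ℝ) : Prop where
  smooth : ContDiff ℝ (⊤ : ℕ∞) ψ₀
  compact_support : HasCompactSupport ψ₀
  eq_one : ∀ z, pnorm z ≤ 1 → ψ₀ z = 1
  eq_zero : ∀ z, 2 ≤ pnorm z → ψ₀ z = 0

/-!
Cauchy–Schwarz and Plancherel on the Fourier side, against the weight `1 + ∑ᵢ |ξᵢ| ^ kᵢ` with
`kᵢ = 2m` in space and `kᵢ = m` in time, bound a Hölder seminorm of `u` by `‖u‖_{W₂^{2m,m}}`: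
the inverse weight, multiplied by a small power of `‖ξ‖`, is square integrable precisely because
`∑ᵢ 1 / kᵢ = (n + 2) / (2m) < 2`. Hence `u z₀` is within a constant of the average of `u` over the
cube of radius `2⁻ᴺ` around `z₀`, where `N` is comparable to `1 + log⁺ ‖u‖_{W₂^{2m,m}}`. Doubling
the radius of a cube moves the average by at most a multiple of the parabolic BMO norm, and after
`2N` doublings the radius is `2ᴺ`, so large that the `L²` norm alone bounds the average by `1`.
-/

theorem norm_le_sum_abs {ι : Type*} [Fintype ι] (ξ : EuclideanSpace ℝ ι) : ‖ξ‖ ≤ ∑ i, |ξ i| := by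
  simpa only [EuclideanSpace.norm_eq, Real.norm_eq_abs] using
    Real.sqrt_le_iff.2 ⟨Finset.sum_nonneg fun _ _ ↦ abs_nonneg _,
      Finset.sum_sq_le_sq_sum_of_nonneg fun i _ ↦ abs_nonneg (ξ i)⟩

section HolderEmbedding

open SchwartzMap LineDeriv

theorem norm_exp_mul_I_sub_exp_mul_I_le {θ : ℝ} (hθ₀ : 0 ≤ θ) (hθ₁ : θ ≤ 1) (a b : ℝ) :
    ‖Complex.exp (a * Complex.I) - Complex.exp (b * Complex.I)‖ ≤ 2 * |a - b| ^ θ := by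
  have lipschitz : ‖Complex.exp (a * Complex.I) - Complex.exp (b * Complex.I)‖ ≤ |a - b| := by
    have factor : Complex.exp (a * Complex.I) - Complex.exp (b * Complex.I)
        = Complex.exp (b * Complex.I) * (Complex.exp (Complex.I * ((a - b : ℝ) : ℂ)) - 1) := by
      rw [mul_sub, ← Complex.exp_add, mul_one]
      congr 2
      push_cast
      ring
    rw [factor, norm_mul, Complex.norm_exp_ofReal_mul_I, one_mul]
    exact Real.norm_exp_I_mul_ofReal_sub_one_le
  have bounded : ‖Complex.exp (a * Complex.I) - Complex.exp (b * Complex.I)‖ ≤ 2 := by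
    refine (norm_sub_le _ _).trans_eq ?_
    rw [Complex.norm_exp_ofReal_mul_I, Complex.norm_exp_ofReal_mul_I, one_add_one_eq_two]
  rcases le_total |a - b| 1 with h | h
  · have : |a - b| ≤ |a - b| ^ θ := by
      simpa using Real.rpow_le_rpow_of_exponent_ge' (abs_nonneg (a - b)) h hθ₀ hθ₁
    linarith [abs_nonneg (a - b)]
  · linarith [Real.one_le_rpow h hθ₀]

variable {V E H : Type*} [NormedAddCommGroup V] [InnerProductSpace ℝ V] [FiniteDimensional ℝ V]
  [MeasurableSpace V] [BorelSpace V] [NormedAddCommGroup E] [NormedSpace ℂ E]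
  [NormedAddCommGroup H] [InnerProductSpace ℂ H] [CompleteSpace H]

theorem norm_fourierInv_sub_fourierInv_le {g : V → E} {θ : ℝ} (hθ₀ : 0 ≤ θ) (hθ₁ : θ ≤ 1)
    (hg : Integrable g) (hgθ : Integrable fun ξ ↦ ‖ξ‖ ^ θ * ‖g ξ‖) (z w : V) :
    ‖𝓕⁻ g z - 𝓕⁻ g w‖ ≤ 2 * (2 * π * ‖z - w‖) ^ θ * ∫ ξ, ‖ξ‖ ^ θ * ‖g ξ‖ := by
  have integrable_exp (x : V) :
      Integrable fun ξ ↦ Complex.exp (↑(2 * π * inner ℝ ξ x) * Complex.I) • g ξ :=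
    hg.bdd_smul 1 (by fun_prop) <| Filter.Eventually.of_forall fun ξ ↦
      (Complex.norm_exp_ofReal_mul_I _).le
  rw [Real.fourierInv_eq', Real.fourierInv_eq', ← integral_sub (integrable_exp z)
    (integrable_exp w), ← integral_const_mul]
  refine norm_integral_le_of_norm_le (hgθ.const_mul _) <| .of_forall fun ξ ↦ ?_
  have phase : |2 * π * inner ℝ ξ z - 2 * π * inner ℝ ξ w| ≤ 2 * π * ‖z - w‖ * ‖ξ‖ := by
    rw [← mul_sub, ← inner_sub_right, abs_mul, abs_of_pos two_pi_pos, mul_assoc (2 * π),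
      mul_comm ‖z - w‖]
    gcongr
    exact abs_real_inner_le_norm _ _
  rw [← sub_smul, norm_smul]
  calc _ ≤ 2 * |2 * π * inner ℝ ξ z - 2 * π * inner ℝ ξ w| ^ θ * ‖g ξ‖ := by
        gcongr
        exact norm_exp_mul_I_sub_exp_mul_I_le hθ₀ hθ₁ _ _
    _ ≤ 2 * (2 * π * ‖z - w‖ * ‖ξ‖) ^ θ * ‖g ξ‖ := by gcongr
    _ = 2 * (2 * π * ‖z - w‖) ^ θ * (‖ξ‖ ^ θ * ‖g ξ‖) := by
        rw [Real.mul_rpow (by positivity) (norm_nonneg ξ)]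
        ring

theorem eLpNorm_two_fourier (f : 𝓢(V, H)) : eLpNorm (𝓕 f : 𝓢(V, H)) 2 = eLpNorm f 2 := by
  have h := norm_fourier_toL2_eq f
  rw [norm_toLp, norm_toLp] at h
  exact (ENNReal.toReal_eq_toReal_iff' ((𝓕 f : 𝓢(V, H)).memLp 2 volume).eLpNorm_ne_top
    (f.memLp 2 volume).eLpNorm_ne_top).1 h

theorem norm_fourier_iterate_lineDerivOp (v : V) (k : ℕ) (f : 𝓢(V, E)) (ξ : V) :
    ‖𝓕 (∂_{v}^[k] f) ξ‖ = (2 * π * |inner ℝ ξ v|) ^ k * ‖𝓕 f ξ‖ := by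
  induction k generalizing f with
  | zero => simp
  | succ k ih =>
    have growth : (inner ℝ · v : V → ℝ).HasTemperateGrowth := by fun_prop
    rw [Function.iterate_succ_apply, ih, fourier_lineDerivOp_eq, _root_.smul_apply,
      smulLeftCLM_apply_apply growth, norm_smul, norm_smul]
    simp only [norm_mul, Complex.norm_ofNat, Complex.norm_real, Real.norm_eq_abs,
      abs_of_pos Real.pi_pos, Complex.norm_I]
    ring

variable {ι : Type*} [Fintype ι]

/-- The Fourier weight `1 + ∑ᵢ |ξᵢ| ^ kᵢ` matching a Sobolev norm with `k i` derivatives in the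
`i`-th coordinate direction. -/
def anisotropicWeight (k : ι → ℕ) (ξ : EuclideanSpace ℝ ι) : ℝ :=
  1 + ∑ i, |ξ i| ^ k i

section Weight

variable (k : ι → ℕ) (ξ : EuclideanSpace ℝ ι)

theorem one_le_anisotropicWeight : 1 ≤ anisotropicWeight k ξ :=
  le_add_of_nonneg_right <| Finset.sum_nonneg fun _ _ ↦ by positivity

theorem anisotropicWeight_pos : 0 < anisotropicWeight k ξ :=
  one_pos.trans_le (one_le_anisotropicWeight k ξ)

theorem continuous_anisotropicWeight : Continuous (anisotropicWeight k) := by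
  unfold anisotropicWeight
  fun_prop

theorem continuous_norm_rpow_div_anisotropicWeight {θ : ℝ} (hθ : 0 ≤ θ) :
    Continuous fun ξ : EuclideanSpace ℝ ι ↦ ‖ξ‖ ^ θ / anisotropicWeight k ξ :=
  (continuous_norm.rpow_const fun _ ↦ .inr hθ).div (continuous_anisotropicWeight k)
    fun ξ ↦ (anisotropicWeight_pos k ξ).ne'

theorem abs_apply_pow_le_anisotropicWeight (i : ι) : |ξ i| ^ k i ≤ anisotropicWeight k ξ :=
  (Finset.single_le_sum (f := fun i ↦ |ξ i| ^ k i) (fun _ _ ↦ by positivity)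
    (Finset.mem_univ i)).trans (le_add_of_nonneg_left zero_le_one)

variable {k}

theorem abs_apply_le_anisotropicWeight_rpow {i : ι} (hk : k i ≠ 0) :
    |ξ i| ≤ anisotropicWeight k ξ ^ (k i : ℝ)⁻¹ := by
  rw [← Real.pow_rpow_inv_natCast (abs_nonneg (ξ i)) hk]
  gcongr
  exact abs_apply_pow_le_anisotropicWeight k ξ i

theorem norm_le_card_mul_anisotropicWeight (hk : ∀ i, k i ≠ 0) :
    ‖ξ‖ ≤ Fintype.card ι * anisotropicWeight k ξ := by
  have coordinate (i : ι) : |ξ i| ≤ anisotropicWeight k ξ :=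
    (abs_apply_le_anisotropicWeight_rpow ξ (hk i)).trans <|
      Real.rpow_le_self_of_one_le (one_le_anisotropicWeight k ξ) (Nat.cast_inv_le_one _)
  calc ‖ξ‖ ≤ ∑ i, |ξ i| := norm_le_sum_abs ξ
    _ ≤ ∑ _i : ι, anisotropicWeight k ξ := Finset.sum_le_sum fun i _ ↦ coordinate i
    _ = Fintype.card ι * anisotropicWeight k ξ := by simp

theorem prod_one_add_abs_rpow_le_anisotropicWeight (hk : ∀ i, k i ≠ 0) {s : ℝ} (hs : 0 ≤ s) :
    ∏ i, (1 + |ξ i|) ^ s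
      ≤ (2 ^ s) ^ Fintype.card ι * anisotropicWeight k ξ ^ (s * ∑ i, (k i : ℝ)⁻¹) := by
  have weight_nonneg := (anisotropicWeight_pos k ξ).le
  have factor (i : ι) :
      (1 + |ξ i|) ^ s ≤ 2 ^ s * anisotropicWeight k ξ ^ (s * (k i : ℝ)⁻¹) := by
    have : 1 ≤ anisotropicWeight k ξ ^ (k i : ℝ)⁻¹ :=
      Real.one_le_rpow (one_le_anisotropicWeight k ξ) (by positivity)
    rw [mul_comm s, Real.rpow_mul weight_nonneg, ← Real.mul_rpow zero_le_two (by positivity)]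
    gcongr
    linarith [abs_apply_le_anisotropicWeight_rpow ξ (hk i)]
  calc ∏ i, (1 + |ξ i|) ^ s
      ≤ ∏ i, 2 ^ s * anisotropicWeight k ξ ^ (s * (k i : ℝ)⁻¹) :=
        Finset.prod_le_prod (fun _ _ ↦ by positivity) fun i _ ↦ factor i
    _ = _ := by
        rw [Finset.prod_mul_distrib, Finset.prod_const, Finset.card_univ, Finset.mul_sum,
          Real.rpow_sum_of_pos (anisotropicWeight_pos k ξ)]

end Weight

theorem integrable_prod_one_add_abs_rpow_neg {s : ℝ} (hs : 1 < s) :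
    Integrable fun ξ : EuclideanSpace ℝ ι ↦ ∏ i, (1 + |ξ i|) ^ (-s) := by
  have one_dim : Integrable fun x : ℝ ↦ (1 + |x|) ^ (-s) :=
    integrable_one_add_norm (by simpa only [Module.finrank_self, Nat.cast_one] using hs)
  exact (EuclideanSpace.volume_preserving_symm_measurableEquiv_toLp ι).integrable_comp_of_integrable
    (Integrable.fintype_prod fun _ ↦ one_dim)

theorem memLp_norm_rpow_div_anisotropicWeight {k : ι → ℕ} (hk : ∀ i, k i ≠ 0) {s θ : ℝ}
    (hs : 1 < s) (hθ : 0 ≤ θ) (hsθ : s * ∑ i, (k i : ℝ)⁻¹ + 2 * θ = 2) :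
    MemLp (fun ξ ↦ ‖ξ‖ ^ θ / anisotropicWeight k ξ) 2 := by
  have continuous := continuous_norm_rpow_div_anisotropicWeight k hθ
  rw [memLp_two_iff_integrable_sq_norm continuous.aestronglyMeasurable]
  refine ((integrable_prod_one_add_abs_rpow_neg hs).const_mul
    ((Fintype.card ι : ℝ) ^ (2 * θ) * (2 ^ s) ^ Fintype.card ι)).mono'
    (continuous.norm.pow 2).aestronglyMeasurable <| .of_forall fun ξ ↦ ?_
  set w := anisotropicWeight k ξ
  have hw : 0 < w := anisotropicWeight_pos k ξ
  have norm_bound : ‖ξ‖ ^ (2 * θ) ≤ (Fintype.card ι : ℝ) ^ (2 * θ) * w ^ (2 * θ) := by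
    rw [← Real.mul_rpow (by positivity) hw.le]
    gcongr
    exact norm_le_card_mul_anisotropicWeight ξ hk
  have prod_bound := prod_one_add_abs_rpow_le_anisotropicWeight ξ hk (zero_le_one.trans hs.le)
  have prod_pos : 0 < ∏ i, (1 + |ξ i|) ^ s := Finset.prod_pos fun _ _ ↦ by positivity
  have weight_sq : w ^ 2 = w ^ (s * ∑ i, (k i : ℝ)⁻¹) * w ^ (2 * θ) := by
    rw [← Real.rpow_add hw, hsθ, Real.rpow_two]
  simp only [Real.rpow_neg (add_nonneg zero_le_one (abs_nonneg (ξ _))), Finset.prod_inv_distrib]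
  rw [norm_pow, norm_norm, Real.norm_of_nonneg (by positivity), div_pow, ← Real.rpow_mul_natCast
    (norm_nonneg ξ), Nat.cast_two, mul_comm θ, ← div_eq_mul_inv, div_le_div_iff₀ (by positivity)
    prod_pos, weight_sq]
  calc ‖ξ‖ ^ (2 * θ) * ∏ i, (1 + |ξ i|) ^ s
      ≤ (Fintype.card ι ^ (2 * θ) * w ^ (2 * θ))
        * ((2 ^ s) ^ Fintype.card ι * w ^ (s * ∑ i, (k i : ℝ)⁻¹)) := by gcongr
    _ = _ := by ring

theorem eLpNorm_anisotropicWeight_smul_fourier_le [DecidableEq ι] (k : ι → ℕ)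
    (f : 𝓢(EuclideanSpace ℝ ι, H)) :
    eLpNorm (fun ξ ↦ anisotropicWeight k ξ • 𝓕 f ξ) 2
      ≤ eLpNorm f 2 + ∑ i, eLpNorm ⇑(∂_{EuclideanSpace.single i (1 : ℝ)}^[k i] f) 2 := by
  have continuous_fourier : Continuous ⇑(𝓕 f : 𝓢(EuclideanSpace ℝ ι, H)) := (𝓕 f).continuous
  have term (i : ι) : eLpNorm (fun ξ : EuclideanSpace ℝ ι ↦ |ξ i| ^ k i • 𝓕 f ξ) 2
      ≤ eLpNorm ⇑(∂_{EuclideanSpace.single i (1 : ℝ)}^[k i] f) 2 := by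
    rw [← eLpNorm_two_fourier (∂_{EuclideanSpace.single i (1 : ℝ)}^[k i] f)]
    refine eLpNorm_mono fun ξ ↦ ?_
    rw [norm_fourier_iterate_lineDerivOp, norm_smul, norm_pow, Real.norm_eq_abs, abs_abs,
      EuclideanSpace.inner_single_right, one_mul, conj_trivial]
    gcongr
    nlinarith [Real.pi_gt_three, abs_nonneg (ξ i)]
  have split : (fun ξ ↦ anisotropicWeight k ξ • 𝓕 f ξ)
      = 𝓕 f + ∑ i, fun ξ : EuclideanSpace ℝ ι ↦ |ξ i| ^ k i • 𝓕 f ξ := by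
    ext ξ
    simp [anisotropicWeight, add_smul, Finset.sum_smul]
  rw [split, ← eLpNorm_two_fourier f]
  refine (eLpNorm_add_le (by fun_prop) ?_ one_le_two).trans ?_
  · exact Finset.aestronglyMeasurable_sum _ fun i _ ↦ by fun_prop
  gcongr
  refine (eLpNorm_sum_le (fun i _ ↦ by fun_prop) one_le_two).trans ?_
  exact Finset.sum_le_sum fun i _ ↦ term i

theorem eLpNorm_norm_rpow_smul_fourier_le [DecidableEq ι] (k : ι → ℕ) {θ : ℝ} (hθ : 0 ≤ θ)
    (f : 𝓢(EuclideanSpace ℝ ι, H)) :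
    eLpNorm (fun ξ ↦ ‖ξ‖ ^ θ • 𝓕 f ξ) 1
      ≤ eLpNorm (fun ξ : EuclideanSpace ℝ ι ↦ ‖ξ‖ ^ θ / anisotropicWeight k ξ) 2
        * (eLpNorm f 2 + ∑ i, eLpNorm ⇑(∂_{EuclideanSpace.single i (1 : ℝ)}^[k i] f) 2) := by
  have continuous_fourier : Continuous ⇑(𝓕 f : 𝓢(EuclideanSpace ℝ ι, H)) := (𝓕 f).continuous
  have continuous_weight := continuous_anisotropicWeight k
  have split : (fun ξ ↦ ‖ξ‖ ^ θ • 𝓕 f ξ) = (fun ξ ↦ ‖ξ‖ ^ θ / anisotropicWeight k ξ)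
      • fun ξ ↦ anisotropicWeight k ξ • 𝓕 f ξ := by
    ext ξ
    simp only [Pi.smul_apply', smul_smul, div_mul_cancel₀ _ (anisotropicWeight_pos k ξ).ne']
  rw [split]
  refine (eLpNorm_smul_le_mul_eLpNorm (p := 2) (q := 2) (by fun_prop)
    (continuous_norm_rpow_div_anisotropicWeight k hθ).aestronglyMeasurable).trans ?_
  gcongr
  exact eLpNorm_anisotropicWeight_smul_fourier_le k f

theorem integrable_and_integral_norm_rpow_mul_norm_fourier_le [DecidableEq ι] {k : ι → ℕ} {θ : ℝ}
    (hθ : 0 ≤ θ) (hkθ : MemLp (fun ξ ↦ ‖ξ‖ ^ θ / anisotropicWeight k ξ) 2)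
    (f : 𝓢(EuclideanSpace ℝ ι, H)) :
    Integrable (fun ξ ↦ ‖ξ‖ ^ θ * ‖𝓕 f ξ‖) ∧
      ∫ ξ, ‖ξ‖ ^ θ * ‖𝓕 f ξ‖ ≤ (eLpNorm (fun ξ ↦ ‖ξ‖ ^ θ / anisotropicWeight k ξ) 2).toReal
        * ((eLpNorm f 2).toReal
          + ∑ i, (eLpNorm ⇑(∂_{EuclideanSpace.single i (1 : ℝ)}^[k i] f) 2).toReal) := by
  have measurable : AEStronglyMeasurable fun ξ ↦ ‖ξ‖ ^ θ • 𝓕 f ξ :=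
    ((continuous_norm.rpow_const fun _ ↦ .inr hθ).smul (𝓕 f).continuous).aestronglyMeasurable
  have f_ne_top : eLpNorm f 2 ≠ ∞ := (f.memLp 2 volume).eLpNorm_ne_top
  have derivative_ne_top : ∀ i ∈ Finset.univ,
      eLpNorm ⇑(∂_{EuclideanSpace.single i (1 : ℝ)}^[k i] f) 2 ≠ ∞ :=
    fun i _ ↦ (SchwartzMap.memLp _ 2 volume).eLpNorm_ne_top
  have bound := eLpNorm_norm_rpow_smul_fourier_le k hθ f
  have bound_ne_top := ENNReal.mul_ne_top hkθ.eLpNorm_ne_top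
    (ENNReal.add_ne_top.2 ⟨f_ne_top, ENNReal.sum_ne_top.2 derivative_ne_top⟩)
  have norm_eq (ξ) : ‖‖ξ‖ ^ θ • 𝓕 f ξ‖ = ‖ξ‖ ^ θ * ‖𝓕 f ξ‖ := by
    rw [norm_smul, Real.norm_of_nonneg (by positivity)]
  simp only [← norm_eq]
  refine ⟨(memLp_one_iff_integrable.1 ⟨measurable, bound.trans_lt bound_ne_top.lt_top⟩).norm, ?_⟩
  rw [integral_norm_eq_lintegral_enorm measurable, ← eLpNorm_one_eq_lintegral_enorm,
    ← ENNReal.toReal_sum derivative_ne_top,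
    ← ENNReal.toReal_add f_ne_top (ENNReal.sum_ne_top.2 derivative_ne_top), ← ENNReal.toReal_mul]
  exact ENNReal.toReal_mono bound_ne_top bound

theorem exists_norm_sub_le_of_sum_inv_lt_two [DecidableEq ι] {k : ι → ℕ} (hk : ∀ i, k i ≠ 0)
    (hσ : ∑ i, (k i : ℝ)⁻¹ < 2) :
    ∃ θ K : ℝ, 0 < θ ∧ θ ≤ 1 ∧ 0 ≤ K ∧ ∀ (f : 𝓢(EuclideanSpace ℝ ι, H)) z w,
      ‖f z - f w‖ ≤ K * ‖z - w‖ ^ θ * ((eLpNorm f 2).toReal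
        + ∑ i, (eLpNorm ⇑(∂_{EuclideanSpace.single i (1 : ℝ)}^[k i] f) 2).toReal) := by
  set σ := ∑ i, (k i : ℝ)⁻¹
  have hσ₀ : 0 ≤ σ := Finset.sum_nonneg fun _ _ ↦ by positivity
  set s := 4 / (σ + 2)
  set θ := (2 - σ) / (σ + 2)
  have hs : 1 < s := (one_lt_div (by linarith)).2 (by linarith)
  have hθ₀ : 0 < θ := div_pos (by linarith) (by linarith)
  have hθ₁ : θ ≤ 1 := (div_le_one (by linarith)).2 (by linarith)
  have hsθ : s * σ + 2 * θ = 2 := by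
    simp only [s, θ]
    field_simp
    ring
  have weight_memLp := memLp_norm_rpow_div_anisotropicWeight hk hs hθ₀.le hsθ
  set A := (eLpNorm (fun ξ ↦ ‖ξ‖ ^ θ / anisotropicWeight k ξ) 2).toReal
  refine ⟨θ, 2 * (2 * π) ^ θ * A, hθ₀, hθ₁, by positivity, fun f z w ↦ ?_⟩
  obtain ⟨integrable_fourier, integral_bound⟩ :=
    integrable_and_integral_norm_rpow_mul_norm_fourier_le hθ₀.le weight_memLp f
  set S := (eLpNorm f 2).toReal
    + ∑ i, (eLpNorm ⇑(∂_{EuclideanSpace.single i (1 : ℝ)}^[k i] f) 2).toReal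
  have inversion (x) : f x = 𝓕⁻ ⇑(𝓕 f : 𝓢(EuclideanSpace ℝ ι, H)) x := by
    rw [← fourierInv_coe, FourierPair.fourierInv_fourier_eq]
  calc ‖f z - f w‖ ≤ 2 * (2 * π * ‖z - w‖) ^ θ * ∫ ξ, ‖ξ‖ ^ θ * ‖𝓕 f ξ‖ := by
        rw [inversion z, inversion w]
        exact norm_fourierInv_sub_fourierInv_le hθ₀.le hθ₁ (𝓕 f).integrable integrable_fourier z w
    _ ≤ 2 * (2 * π * ‖z - w‖) ^ θ * (A * S) := by gcongr
    _ = 2 * (2 * π) ^ θ * A * ‖z - w‖ ^ θ * S := by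
        rw [Real.mul_rpow two_pi_pos.le (norm_nonneg _)]
        ring

end HolderEmbedding

section SobolevNorm

open SchwartzMap LineDeriv

variable {V F G : Type*} [NormedAddCommGroup V] [NormedSpace ℝ V]
  [NormedAddCommGroup F] [NormedSpace ℝ F] [NormedAddCommGroup G] [NormedSpace ℝ G]

theorem coe_iterate_lineDerivOp (v : V) (k : ℕ) (f : 𝓢(V, F)) :
    ⇑(∂_{v}^[k] f) = (fun (g : V → F) x ↦ fderiv ℝ g x v)^[k] f :=
  Function.Semiconj.iterate_right (f := (⇑· : 𝓢(V, F) → V → F)) (fun _ ↦ rfl) k f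

theorem lineDerivOp_postcompCLM (L : F →L[ℝ] G) (v : V) (f : 𝓢(V, F)) :
    ∂_{v} (f.postcompCLM L) = (∂_{v} f).postcompCLM L := by
  ext x
  have chain_rule : HasFDerivAt (f.postcompCLM L) (L ∘L fderiv ℝ f x) x :=
    L.hasFDerivAt.comp x (f.hasFDerivAt x)
  simp only [postcompCLM_apply, lineDerivOp_apply_eq_fderiv, chain_rule.fderiv,
    ContinuousLinearMap.comp_apply]

theorem iterate_lineDerivOp_postcompCLM (L : F →L[ℝ] G) (v : V) (k : ℕ) (f : 𝓢(V, F)) :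
    ∂_{v}^[k] (f.postcompCLM L) = (∂_{v}^[k] f).postcompCLM L :=
  (Function.Semiconj.iterate_right (fun f ↦ (lineDerivOp_postcompCLM L v f).symm) k f).symm

variable {n : ℕ}

theorem DxPow_zero (u : PSpace n → ℝ) : DxPow 0 u = u :=
  List.foldr_fixed (b := u) (List.finRange n)

theorem foldr_iterate_single {ι α : Type*} [DecidableEq ι] (F : ι → α → α) (i : ι) (k : ℕ)
    (a : α) {l : List ι} (hl : l.Nodup) (hi : i ∈ l) :
    l.foldr (fun j ↦ (F j)^[(Pi.single i k : ι → ℕ) j]) a = (F i)^[k] a := by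
  induction l with
  | nil => exact absurd hi List.not_mem_nil
  | cons j l ih =>
    obtain ⟨hj, hl⟩ := List.nodup_cons.1 hl
    rcases List.mem_cons.1 hi with rfl | hi
    · have tail : l.foldr (fun j ↦ (F j)^[(Pi.single i k : ι → ℕ) j]) a = a := by
        rw [List.foldr_ext _ (fun _ b ↦ b) a fun j hjl b ↦ ?_, List.foldr_fixed]
        rw [Pi.single_eq_of_ne (ne_of_mem_of_not_mem hjl hj), Function.iterate_zero_apply]
      rw [List.foldr_cons, tail, Pi.single_eq_same]
    · rw [List.foldr_cons, ih hl hi, Pi.single_eq_of_ne (ne_of_mem_of_not_mem hi hj).symm,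
        Function.iterate_zero_apply]

theorem DxPow_single (i : Fin n) (k : ℕ) (u : PSpace n → ℝ) :
    DxPow (Pi.single i k) u = (Dx i)^[k] u :=
  foldr_iterate_single Dx i k u (List.nodup_finRange n) (List.mem_finRange i)

variable (O : Set (PSpace n)) (u : PSpace n → ℝ)

theorem L2norm_mixDeriv_le_sobNorm {m r : ℕ} {α : Fin n → ℕ} (h : 2 * r + ∑ i, α i ≤ 2 * m) :
    L2norm O (mixDeriv r α u) ≤ sobNorm m O u := by
  set s := ∑ i, α i
  have L2norm_nonneg (v : PSpace n → ℝ) : 0 ≤ L2norm O v := ENNReal.toReal_nonneg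
  calc L2norm O (mixDeriv r α u)
      ≤ ∑ β ∈ Finset.Nat.antidiagonalTuple n s, L2norm O (mixDeriv r β u) :=
        Finset.single_le_sum (f := fun β ↦ L2norm O (mixDeriv r β u)) (fun _ _ ↦ L2norm_nonneg _)
          (Finset.Nat.mem_antidiagonalTuple.2 rfl)
    _ ≤ sobNorm m O u :=
        Finset.single_le_sum (f := fun p : ℕ × ℕ ↦ ∑ β ∈ Finset.Nat.antidiagonalTuple n p.2,
          L2norm O (mixDeriv p.1 β u)) (a := (r, s))
          (fun _ _ ↦ Finset.sum_nonneg fun _ _ ↦ L2norm_nonneg _)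
          (by simp only [Finset.mem_filter, Finset.mem_product, Finset.mem_range]; omega)

theorem L2norm_le_sobNorm (m : ℕ) : L2norm O u ≤ sobNorm m O u := by
  simpa [mixDeriv, DxPow_zero] using
    L2norm_mixDeriv_le_sobNorm O u (m := m) (r := 0) (α := 0) (by simp)

/-- The number of derivatives controlled by the `W₂^{2m,m}` norm in each coordinate direction: `2m`
in space and `m` in time. -/
def parabolicOrder (n m : ℕ) : Fin (n + 1) → ℕ :=
  Fin.snoc (fun _ ↦ 2 * m) m

theorem sum_inv_parabolicOrder (n : ℕ) {m : ℕ} :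
    ∑ i, (parabolicOrder n m i : ℝ)⁻¹ = (n + 2) / (2 * m) := by
  simp [parabolicOrder, Fin.sum_univ_castSucc]
  field_simp

theorem parabolicOrder_ne_zero {m : ℕ} (hm : m ≠ 0) (i : Fin (n + 1)) :
    parabolicOrder n m i ≠ 0 := by
  cases i using Fin.lastCases <;> simp [parabolicOrder, hm]

theorem L2norm_iterate_lineDerivOp_parabolicOrder_le_sobNorm (m : ℕ) (i : Fin (n + 1))
    (u : 𝓢(PSpace n, ℝ)) :
    L2norm O ⇑(∂_{EuclideanSpace.single i (1 : ℝ)}^[parabolicOrder n m i] u) ≤ sobNorm m O u := by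
  rw [coe_iterate_lineDerivOp]
  cases i using Fin.lastCases with
  | last =>
    have time := L2norm_mixDeriv_le_sobNorm O u (m := m) (r := m) (α := 0) (by simp)
    rw [mixDeriv, DxPow_zero] at time
    rw [parabolicOrder, Fin.snoc_last]
    exact time
  | cast i =>
    have space := L2norm_mixDeriv_le_sobNorm O u (m := m) (r := 0) (α := Pi.single i (2 * m))
      (by simp)
    rw [mixDeriv, DxPow_single] at space
    rw [parabolicOrder, Fin.snoc_castSucc]
    exact space

theorem exists_abs_sub_le_sobNorm {m : ℕ} (hmn : ((n : ℝ) + 2) / 4 < m) :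
    ∃ θ K : ℝ, 0 < θ ∧ θ ≤ 1 ∧ 0 ≤ K ∧ ∀ (u : 𝓢(PSpace n, ℝ)) z w,
      |u z - u w| ≤ K * ‖z - w‖ ^ θ * sobNorm m Set.univ u := by
  have hm : (0 : ℝ) < m := lt_trans (by positivity) hmn
  have order_ne_zero := parabolicOrder_ne_zero (n := n) (Nat.cast_pos.1 hm).ne'
  have sum_lt_two : ∑ i, (parabolicOrder n m i : ℝ)⁻¹ < 2 := by
    rw [sum_inv_parabolicOrder, div_lt_iff₀ (by positivity)]
    linarith
  obtain ⟨θ, K, hθ₀, hθ₁, hK, holder⟩ :=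
    exists_norm_sub_le_of_sum_inv_lt_two (H := ℂ) order_ne_zero sum_lt_two
  refine ⟨θ, K * (n + 2), hθ₀, hθ₁, by positivity, fun u z w ↦ ?_⟩
  have eLpNorm_complexify (g : 𝓢(PSpace n, ℝ)) :
      (eLpNorm (g.postcompCLM Complex.ofRealCLM) 2).toReal = L2norm Set.univ g := by
    rw [L2norm, Measure.restrict_univ]
    exact congrArg _ (eLpNorm_congr_norm_ae (.of_forall fun x ↦ by simp))
  have terms_le := add_le_add (L2norm_le_sobNorm Set.univ u m) <|
    Finset.sum_le_sum fun i (_ : i ∈ Finset.univ) ↦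
      L2norm_iterate_lineDerivOp_parabolicOrder_le_sobNorm Set.univ m i u
  have complexified := holder (u.postcompCLM Complex.ofRealCLM) z w
  simp only [iterate_lineDerivOp_postcompCLM, eLpNorm_complexify] at complexified
  calc |u z - u w|
      = ‖u.postcompCLM Complex.ofRealCLM z - u.postcompCLM Complex.ofRealCLM w‖ := by
        simp [← Complex.ofReal_sub]
    _ ≤ _ := complexified
    _ ≤ K * ‖z - w‖ ^ θ
          * (sobNorm m Set.univ u + ∑ _i : Fin (n + 1), sobNorm m Set.univ u) := by gcongr
    _ = K * (n + 2) * ‖z - w‖ ^ θ * sobNorm m Set.univ u := by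
        simp
        ring

end SobolevNorm

section Average

variable {α E : Type*} [MeasurableSpace α] {μ : Measure α} [NormedAddCommGroup E] [NormedSpace ℝ E]
  {s t : Set α} {f : α → E}

theorem setAverage_sub_const [CompleteSpace E] (hf : IntegrableOn f s μ) (hs₀ : μ s ≠ 0)
    (hs : μ s ≠ ∞) (c : E) : ⨍ x in s, (f x - c) ∂μ = (⨍ x in s, f x ∂μ) - c := by
  have hc : Integrable (fun _ ↦ c) ((μ.restrict s Set.univ)⁻¹ • μ.restrict s) :=
    Integrable.to_average (integrableOn_const hs)
  rw [average, integral_sub hf.to_average hc]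
  exact congrArg _ (setAverage_const hs₀ hs c)

theorem norm_setAverage_le_of_norm_le_const {M : ℝ} (hM : 0 ≤ M) (h : ∀ x ∈ s, ‖f x‖ ≤ M) :
    ‖⨍ x in s, f x ∂μ‖ ≤ M := by
  obtain hs | hs := eq_or_ne (μ s) ∞
  · simpa [setAverage_eq, Measure.real, hs] using hM
  · rw [setAverage_eq, norm_smul, norm_inv, Real.norm_of_nonneg measureReal_nonneg]
    exact inv_mul_le_of_le_mul₀ measureReal_nonneg hM <| mul_comm M _ ▸
      norm_setIntegral_le_of_norm_le_const hs.lt_top h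

theorem norm_setAverage_sub_le [CompleteSpace E] (hst : s ⊆ t) (hf : IntegrableOn f t μ)
    (hs : μ s ≠ 0) (ht : μ t ≠ ∞) (c : E) :
    ‖(⨍ x in s, f x ∂μ) - c‖ ≤ μ.real t / μ.real s * ⨍ x in t, ‖f x - c‖ ∂μ := by
  have hs_top : μ s ≠ ∞ := measure_ne_top_of_subset hst ht
  have ht_pos : 0 < μ.real t :=
    ENNReal.toReal_pos (fun h ↦ hs (measure_mono_null hst h)) ht
  have deviation : IntegrableOn (fun x ↦ ‖f x - c‖) t μ := (hf.sub (integrableOn_const ht)).norm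
  rw [← setAverage_sub_const (hf.mono_set hst) hs hs_top, setAverage_eq, setAverage_eq, norm_smul,
    norm_inv, Real.norm_of_nonneg measureReal_nonneg, smul_eq_mul, ← mul_assoc,
    div_mul_eq_mul_div, mul_inv_cancel₀ ht_pos.ne', one_div]
  gcongr
  calc ‖∫ x in s, (f x - c) ∂μ‖
      ≤ ∫ x in s, ‖f x - c‖ ∂μ := norm_integral_le_integral_norm _
    _ ≤ ∫ x in t, ‖f x - c‖ ∂μ :=
        setIntegral_mono_set deviation (.of_forall fun _ ↦ norm_nonneg _) hst.eventuallyLE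

theorem enorm_setAverage_le_eLpNorm {p : ℝ≥0∞} (hp : 1 ≤ p)
    (hf : AEStronglyMeasurable f (μ.restrict s)) :
    ‖⨍ x in s, f x ∂μ‖ₑ ≤ (μ s)⁻¹ ^ (1 / p).toReal * eLpNorm f p (μ.restrict s) := by
  obtain hs₀ | hs₀ := eq_or_ne (μ s) 0
  · simp [Measure.restrict_eq_zero.2 hs₀]
  obtain hs | hs := eq_or_ne (μ s) ∞
  · simp [setAverage_eq, Measure.real, hs]
  have : IsProbabilityMeasure ((μ s)⁻¹ • μ.restrict s) :=
    ⟨by simp [ENNReal.inv_mul_cancel hs₀ hs]⟩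
  rw [← smul_eq_mul, ← eLpNorm_smul_measure_of_ne_zero (ENNReal.inv_ne_zero.2 hs), average,
    Measure.restrict_apply_univ]
  calc ‖∫ x, f x ∂(μ s)⁻¹ • μ.restrict s‖ₑ
      ≤ ∫⁻ x, ‖f x‖ₑ ∂(μ s)⁻¹ • μ.restrict s := enorm_integral_le_lintegral_enorm _
    _ = eLpNorm f 1 ((μ s)⁻¹ • μ.restrict s) := eLpNorm_one_eq_lintegral_enorm.symm
    _ ≤ eLpNorm f p ((μ s)⁻¹ • μ.restrict s) :=
        eLpNorm_le_eLpNorm_of_exponent_le hp (hf.smul_measure _)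

end Average

section ParabolicCube

variable {n : ℕ} {z₀ z : PSpace n} {r R : ℝ}

/-- The half side lengths of a parabolic cube of radius `r`: `r` in every spatial direction and
`r ^ 2` in time, which is the last coordinate. -/
def pCubeHalfwidth (n : ℕ) (r : ℝ) : Fin (n + 1) → ℝ :=
  Fin.snoc (fun _ ↦ r) (r ^ 2)

theorem mem_pCube_iff (hr : 0 < r) :
    z ∈ pCube z₀ r ↔ ∀ i, |z i - z₀ i| < pCubeHalfwidth n r i := by
  have spatial : (⨆ i : Fin n, |(z - z₀) i.castSucc|) < r
      ↔ ∀ i : Fin n, |(z - z₀) i.castSucc| < r := by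
    obtain _ | _ := isEmpty_or_nonempty (Fin n)
    · simp [hr]
    · refine ⟨fun h i ↦ (le_ciSup (Set.finite_range _).bddAbove i).trans_lt h, fun h ↦ ?_⟩
      obtain ⟨i, hi⟩ := exists_eq_ciSup_of_finite (f := fun i : Fin n ↦ |(z - z₀) i.castSucc|)
      exact hi ▸ h i
  rw [pCube, Set.mem_ofPred_eq, pnorm, max_lt_iff, spatial, Real.sqrt_lt' hr]
  simp [Fin.forall_fin_succ', pCubeHalfwidth]

theorem pCube_subset_pCube (h : r ≤ R) : pCube z₀ r ⊆ pCube z₀ R :=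
  fun _ hz ↦ hz.trans_le h

theorem norm_sub_le_of_mem_pCube (hr : 0 < r) (hr₁ : r ≤ 1) (hz : z ∈ pCube z₀ r) :
    ‖z - z₀‖ ≤ (n + 1) * r := by
  have coordinate (i : Fin (n + 1)) : |(z - z₀) i| ≤ r := by
    have := (mem_pCube_iff hr).1 hz i
    cases i using Fin.lastCases <;> simp [pCubeHalfwidth] at this ⊢ <;> nlinarith
  calc ‖z - z₀‖ ≤ ∑ i, |(z - z₀) i| := norm_le_sum_abs _
    _ ≤ ∑ _i : Fin (n + 1), r := Finset.sum_le_sum fun i _ ↦ coordinate i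
    _ = (n + 1) * r := by simp

theorem volume_pCube (hr : 0 < r) :
    volume (pCube z₀ r) = ENNReal.ofReal (2 ^ (n + 1) * r ^ (n + 2)) := by
  have eq_preimage : pCube z₀ r = (MeasurableEquiv.toLp 2 (Fin (n + 1) → ℝ)).symm ⁻¹'
      Set.univ.pi fun i ↦ Metric.ball (z₀ i) (pCubeHalfwidth n r i) := by
    ext z
    rw [mem_pCube_iff hr]
    simp [Real.dist_eq]
  rw [eq_preimage, (EuclideanSpace.volume_preserving_symm_measurableEquiv_toLp _
    ).measure_preimage_equiv, volume_pi_pi]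
  simp only [Real.volume_ball, Fin.prod_univ_castSucc, pCubeHalfwidth, Fin.snoc_castSucc,
    Fin.snoc_last, Finset.prod_const, Finset.card_univ, Fintype.card_fin]
  rw [← ENNReal.ofReal_pow (by positivity), ← ENNReal.ofReal_mul (by positivity)]
  ring_nf

theorem measureReal_pCube (hr : 0 < r) :
    volume.real (pCube z₀ r) = 2 ^ (n + 1) * r ^ (n + 2) := by
  rw [Measure.real, volume_pCube hr, ENNReal.toReal_ofReal (by positivity)]

theorem volume_pCube_ne_zero (hr : 0 < r) : volume (pCube z₀ r) ≠ 0 := by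
  rw [volume_pCube hr, ENNReal.ofReal_ne_zero_iff]
  positivity

theorem volume_pCube_ne_top (hr : 0 < r) : volume (pCube z₀ r) ≠ ∞ := by
  rw [volume_pCube hr]
  exact ENNReal.ofReal_ne_top

end ParabolicCube

section MeanOscillation

variable {n : ℕ} {O : Set (PSpace n)} {u : PSpace n → ℝ} {z₀ : PSpace n} {r R : ℝ}

theorem bddAbove_oscSet {M : ℝ} (hM : 0 ≤ M) (hu : ∀ z ∈ O, |u z| ≤ M) : BddAbove (oscSet O u) := by
  refine ⟨M + M, ?_⟩
  rintro _ ⟨z₀, r, -, hrO, rfl⟩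
  refine (Real.le_norm_self _).trans <|
    norm_setAverage_le_of_norm_le_const (add_nonneg hM hM) fun z hz ↦ ?_
  rw [Real.norm_eq_abs, abs_abs, ← Real.norm_eq_abs]
  exact (norm_sub_le _ _).trans <| add_le_add (hu z (hrO hz)) <|
    norm_setAverage_le_of_norm_le_const hM fun w hw ↦ hu w (hrO hw)

theorem pBMO_nonneg : 0 ≤ pBMO O u := by
  refine Real.sSup_nonneg ?_
  rintro _ ⟨z₀, r, -, -, rfl⟩
  exact integral_nonneg fun _ ↦ abs_nonneg _

theorem abs_setAverage_sub_setAverage_two_mul_le (hr : 0 < r) (hO : pCube z₀ (2 * r) ⊆ O)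
    (hu : IntegrableOn u (pCube z₀ (2 * r))) (hosc : BddAbove (oscSet O u)) :
    |(⨍ z in pCube z₀ r, u z) - ⨍ z in pCube z₀ (2 * r), u z| ≤ 2 ^ (n + 2) * pBMO O u := by
  have h2r : 0 < 2 * r := by positivity
  have volume_ratio : volume.real (pCube z₀ (2 * r)) / volume.real (pCube z₀ r) = 2 ^ (n + 2) := by
    rw [measureReal_pCube hr, measureReal_pCube h2r, mul_pow]
    field_simp
  calc |(⨍ z in pCube z₀ r, u z) - ⨍ z in pCube z₀ (2 * r), u z|
      ≤ 2 ^ (n + 2) * ⨍ z in pCube z₀ (2 * r), |u z - ⨍ w in pCube z₀ (2 * r), u w| :=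
        volume_ratio ▸ norm_setAverage_sub_le (pCube_subset_pCube (by linarith)) hu
          (volume_pCube_ne_zero hr) (volume_pCube_ne_top h2r) _
    _ ≤ 2 ^ (n + 2) * pBMO O u := by
        gcongr
        exact le_csSup hosc ⟨z₀, 2 * r, h2r, hO, rfl⟩

theorem abs_setAverage_sub_setAverage_two_pow_mul_le (hr : 0 < r) (k : ℕ)
    (hO : pCube z₀ (2 ^ k * r) ⊆ O) (hu : IntegrableOn u (pCube z₀ (2 ^ k * r)))
    (hosc : BddAbove (oscSet O u)) :
    |(⨍ z in pCube z₀ r, u z) - ⨍ z in pCube z₀ (2 ^ k * r), u z|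
      ≤ k * (2 ^ (n + 2) * pBMO O u) := by
  induction k with
  | zero => simp
  | succ k ih =>
    rw [pow_succ', mul_assoc] at hO hu ⊢
    have hkr : 0 < 2 ^ k * r := by positivity
    have shrink : pCube z₀ (2 ^ k * r) ⊆ pCube z₀ (2 * (2 ^ k * r)) :=
      pCube_subset_pCube (by linarith)
    have doubling := abs_setAverage_sub_setAverage_two_mul_le hkr hO hu hosc
    have telescoped := ih (shrink.trans hO) (hu.mono_set shrink)
    push_cast
    linarith [abs_sub_le (⨍ z in pCube z₀ r, u z) (⨍ z in pCube z₀ (2 ^ k * r), u z)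
      (⨍ z in pCube z₀ (2 * (2 ^ k * r)), u z)]

theorem abs_setAverage_pCube_le_one (hR : 1 ≤ R) (hu : MemLp u 2 (volume.restrict O))
    (hO : pCube z₀ R ⊆ O) (huR : L2norm O u ≤ R) : |⨍ z in pCube z₀ R, u z| ≤ 1 := by
  have hR₀ : 0 < R := one_pos.trans_le hR
  have sq_le_volume : ENNReal.ofReal R ^ 2 ≤ volume (pCube z₀ R) := by
    rw [volume_pCube hR₀, ← ENNReal.ofReal_pow hR₀.le]
    gcongr
    calc R ^ 2 ≤ R ^ (n + 2) := pow_le_pow_right₀ hR le_add_self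
      _ ≤ 2 ^ (n + 1) * R ^ (n + 2) :=
        le_mul_of_one_le_left (by positivity) (one_le_pow₀ one_le_two)
  have sqrt_sq : (ENNReal.ofReal R ^ 2) ^ (1 / 2 : ℝ) = ENNReal.ofReal R := by
    rw [one_div, ← ENNReal.rpow_ofNat, ENNReal.rpow_rpow_inv two_ne_zero]
  have eLpNorm_le : eLpNorm u 2 (volume.restrict O) ≤ ENNReal.ofReal R :=
    (ENNReal.le_ofReal_iff_toReal_le hu.2.ne hR₀.le).2 huR
  have enorm_le_one : ‖⨍ z in pCube z₀ R, u z‖ₑ ≤ 1 :=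
    calc ‖⨍ z in pCube z₀ R, u z‖ₑ
        ≤ (volume (pCube z₀ R))⁻¹ ^ (1 / 2 : ℝ) * eLpNorm u 2 (volume.restrict (pCube z₀ R)) := by
          simpa using enorm_setAverage_le_eLpNorm one_le_two
            (hu.1.mono_measure (Measure.restrict_mono_set volume hO))
      _ ≤ (ENNReal.ofReal R ^ 2)⁻¹ ^ (1 / 2 : ℝ) * ENNReal.ofReal R := by
          gcongr
          exact (eLpNorm_mono_measure u (Measure.restrict_mono_set volume hO)).trans eLpNorm_le
      _ = 1 := by
          rw [ENNReal.inv_rpow, sqrt_sq]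
          exact ENNReal.inv_mul_cancel (by simpa using hR₀) ENNReal.ofReal_ne_top
  rw [← Real.norm_eq_abs, ← toReal_enorm]
  exact ENNReal.toReal_mono ENNReal.one_ne_top enorm_le_one

theorem abs_sub_setAverage_pCube_le {K θ : ℝ} (hr : 0 < r) (hr₁ : r ≤ 1) (hK : 0 ≤ K)
    (hθ : 0 ≤ θ) (hu : IntegrableOn u (pCube z₀ r))
    (holder : ∀ z ∈ pCube z₀ r, |u z - u z₀| ≤ K * ‖z - z₀‖ ^ θ) :
    |u z₀ - ⨍ z in pCube z₀ r, u z| ≤ K * ((n + 1) * r) ^ θ := by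
  rw [abs_sub_comm, ← setAverage_sub_const hu (volume_pCube_ne_zero hr) (volume_pCube_ne_top hr),
    ← Real.norm_eq_abs]
  refine norm_setAverage_le_of_norm_le_const (by positivity) fun z hz ↦ (holder z hz).trans ?_
  gcongr
  exact norm_sub_le_of_mem_pCube hr hr₁ hz

theorem abs_apply_le_add_pBMO {K θ : ℝ} {N : ℕ} (hK : 0 ≤ K) (hθ : 0 ≤ θ)
    (hu : MemLp u 2 (volume.restrict O)) (hosc : BddAbove (oscSet O u))
    (hO : pCube z₀ (2 ^ N) ⊆ O) (hL2 : L2norm O u ≤ 2 ^ N)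
    (holder : ∀ z ∈ O, |u z - u z₀| ≤ K * (2 ^ N) ^ θ * ‖z - z₀‖ ^ θ) :
    |u z₀| ≤ K * (n + 1) ^ θ + 2 * N * (2 ^ (n + 2) * pBMO O u) + 1 := by
  have one_le : (1 : ℝ) ≤ 2 ^ N := one_le_pow₀ one_le_two
  have inv_le_one : ((2 : ℝ) ^ N)⁻¹ ≤ 1 := inv_le_one_of_one_le₀ one_le
  have small_subset : pCube z₀ (2 ^ N)⁻¹ ⊆ pCube z₀ (2 ^ N) :=
    pCube_subset_pCube (inv_le_one.trans one_le)
  have : IsFiniteMeasure (volume.restrict (pCube z₀ (2 ^ N))) :=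
    isFiniteMeasure_restrict.2 (volume_pCube_ne_top (by positivity))
  have integrable : IntegrableOn u (pCube z₀ (2 ^ N)) :=
    (hu.mono_measure (Measure.restrict_mono_set volume hO)).integrable one_le_two
  have scale : (2 : ℝ) ^ (2 * N) * (2 ^ N)⁻¹ = 2 ^ N := by
    rw [two_mul, pow_add, mul_inv_cancel_right₀ (by positivity)]
  have small_cube : |u z₀ - ⨍ z in pCube z₀ (2 ^ N)⁻¹, u z| ≤ K * (n + 1) ^ θ := by
    convert abs_sub_setAverage_pCube_le (by positivity) inv_le_one (by positivity) hθ
      (integrable.mono_set small_subset) fun z hz ↦ holder z (hO (small_subset hz)) using 1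
    rw [mul_assoc, ← Real.mul_rpow (by positivity) (by positivity), mul_left_comm,
      mul_inv_cancel₀ (by positivity), mul_one]
  have telescoped := abs_setAverage_sub_setAverage_two_pow_mul_le (z₀ := z₀) (r := (2 ^ N)⁻¹)
    (by positivity) (2 * N) (scale.symm ▸ hO) (scale.symm ▸ integrable) hosc
  rw [scale] at telescoped
  have large_cube := abs_setAverage_pCube_le_one one_le hu hO hL2
  push_cast at telescoped
  linarith [abs_sub_le (u z₀) (⨍ z in pCube z₀ (2 ^ N)⁻¹, u z) (⨍ z in pCube z₀ (2 ^ N), u z),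
    abs_sub_abs_le_abs_sub (u z₀) (⨍ z in pCube z₀ (2 ^ N), u z)]

end MeanOscillation

theorem logPlus_nonneg (x : ℝ) : 0 ≤ logPlus x :=
  le_max_right _ _

theorem exists_nat_le_two_pow_rpow {θ : ℝ} (hθ : 0 < θ) (x : ℝ) :
    ∃ N : ℕ, N ≤ (θ * Real.log 2)⁻¹ * logPlus x + 1 ∧ x ≤ (2 ^ N) ^ θ := by
  have hlog : 0 < θ * Real.log 2 := mul_pos hθ (Real.log_pos one_lt_two)
  refine ⟨⌈(θ * Real.log 2)⁻¹ * logPlus x⌉₊, (Nat.ceil_lt_add_one <|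
    mul_nonneg (inv_nonneg.2 hlog.le) (logPlus_nonneg x)).le, ?_⟩
  set N := ⌈(θ * Real.log 2)⁻¹ * logPlus x⌉₊
  have logPlus_le : logPlus x ≤ θ * Real.log 2 * N := (inv_mul_le_iff₀ hlog).1 (Nat.le_ceil _)
  calc x ≤ Real.exp (Real.log x) := Real.le_exp_log x
    _ ≤ Real.exp (Real.log 2 * N * θ) := by
        gcongr
        exact (le_max_left _ _).trans <| logPlus_le.trans_eq (by ring)
    _ = (2 ^ N) ^ θ := by
        rw [Real.exp_mul, ← Real.rpow_natCast, Real.rpow_def_of_pos two_pos]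

/-- **Parabolic logarithmic Sobolev inequality on `ℝ^{n+1}`** (Theorem 1.1):
`‖u‖_∞ ≤ C (1 + ‖u‖_{BMOₚ} (1 + log⁺ ‖u‖_{W₂^{2m,m}}))`. -/
theorem parabolic_log_sobolev_inequality (n m : ℕ) (hn : 1 ≤ n) (hm : 0 < m)
    (hmn : ((n : ℝ) + 2) / 4 < m) :
    ∃ C : ℝ, 0 < C ∧ ∀ u : SchwartzMap (PSpace n) ℝ,
      (⨆ z, |u z|) ≤
        C * (1 + pBMO Set.univ ⇑u * (1 + logPlus (sobNorm m Set.univ ⇑u))) := by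
  obtain ⟨θ, K, hθ₀, hθ₁, hK, holder⟩ := exists_abs_sub_le_sobNorm hmn
  refine ⟨K * (n + 1) ^ θ + 1 + 2 * ((θ * Real.log 2)⁻¹ + 1) * 2 ^ (n + 2), by positivity,
    fun u ↦ ciSup_le fun z₀ ↦ ?_⟩
  obtain ⟨M, hM, decay⟩ := u.decay 0 0
  obtain ⟨N, hN, le_rpow⟩ := exists_nat_le_two_pow_rpow hθ₀ (sobNorm m Set.univ u)
  have one_le_two_pow : (1 : ℝ) ≤ 2 ^ N := one_le_pow₀ one_le_two
  have pointwise : |u z₀| ≤ K * (n + 1) ^ θ + 2 * N * (2 ^ (n + 2) * pBMO Set.univ u) + 1 :=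
    abs_apply_le_add_pBMO hK hθ₀.le ((u.memLp 2).restrict _)
      (bddAbove_oscSet hM.le fun z _ ↦ by simpa using decay z) (Set.subset_univ _)
      ((L2norm_le_sobNorm _ u m).trans <| le_rpow.trans <|
        Real.rpow_le_self_of_one_le one_le_two_pow hθ₁)
      fun z _ ↦ (holder u z z₀).trans <| by
        rw [mul_right_comm]
        gcongr
  have hB : 0 ≤ pBMO Set.univ u := pBMO_nonneg
  have hL := logPlus_nonneg (sobNorm m Set.univ u)
  calc |u z₀|
      ≤ K * (n + 1) ^ θ + 2 * ((θ * Real.log 2)⁻¹ * logPlus (sobNorm m Set.univ u) + 1)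
          * (2 ^ (n + 2) * pBMO Set.univ u) + 1 := pointwise.trans (by gcongr)
    _ ≤ _ := by
        rw [← sub_nonneg]
        ring_nf
        positivity

end
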